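/- (Theorem 3.1) Fix an integer d ≥ 1, m > 0 and x ∈ ℝ^d. Then the probability measures W_{x,a} on Γ̃(x) converge weakly, as a → 0⁺, to (m²/2)·W_x. -/

import Mathlib

/-!
A geometric number of steps is the integer part of an exponential time: if `T` is exponential of
rate `m²/2`, then `W_{x,a}` is the mixture of the laws `W_{x,a,⌊T/a²⌋}`, while `(m²/2) W_x` is the
mixture of the Wiener measures `W_x^T` over the same `T`. It remains to compare the two at a fixed
time `T = t`. The increments of a path under `W_x^t` along the grid `i/N` are independent centred
Gaussians of variance `t/N`, so the polygon through its grid points, dilated about `x` by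
`√(a²N/t)`, has the law of the polygon of `W_{x,a,N}`. For `N = ⌊t/a²⌋` the dilation factor tends
to `1` and the polygons converge uniformly to the path, by uniform continuity. Dominated
convergence, first in the path and then in `t`, concludes.
-/

open MeasureTheory Filter Topology Real Set
open scoped RealInnerProductSpace ENNReal unitInterval

noncomputable section

/-- `ℝ^d` as a Euclidean space. -/
abbrev Ed (d : ℕ) := EuclideanSpace ℝ (Fin d)

/-- The space of continuous paths `[0,1] → ℝ^d`, with the uniform metric. -/
abbrev PathSp (d : ℕ) := C(unitInterval, Ed d)

instance (d : ℕ) : MeasurableSpace (PathSp d) := borel _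
instance (d : ℕ) : BorelSpace (PathSp d) := ⟨rfl⟩

/-- Evaluation of a path at a real time, clamped to `[0,1]`. -/
def evalAt {d : ℕ} (ω : PathSp d) (t : ℝ) : Ed d := ω (Set.projIcc 0 1 zero_le_one t)

/-- `Ω(x)`: continuous paths starting at `x`. -/
abbrev Omega1 {d : ℕ} (x : Ed d) := {ω : PathSp d // ω 0 = x}

/-- `Ω(x,y)`: continuous paths from `x` to `y`. -/
abbrev Omega2 {d : ℕ} (x y : Ed d) := {ω : PathSp d // ω 0 = x ∧ ω 1 = y}

/-- clamp a real number to `[0,1]`. -/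
def clamp01 (r : ℝ) : ℝ := min 1 (max 0 r)

lemma clamp01_of_nonpos {r : ℝ} (h : r ≤ 0) : clamp01 r = 0 := by
  rw [clamp01, max_eq_left h, min_eq_right zero_le_one]

lemma clamp01_of_one_le {r : ℝ} (h : 1 ≤ r) : clamp01 r = 1 := by
  rw [clamp01, max_eq_right (zero_le_one.trans h), min_eq_left h]

lemma clamp01_continuous : Continuous clamp01 :=
  continuous_const.min (continuous_const.max continuous_id)

/-- The piecewise linear path starting at `x` with `N` steps given by the increments `v i`,
the `i`-th step being linearly parametrized by `[i/N, (i+1)/N]`. -/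
def pwLinE {d : ℕ} (x : Ed d) (N : ℕ) (v : Fin N → Ed d) : PathSp d :=
  ⟨fun t => x + ∑ i : Fin N, clamp01 ((N : ℝ) * (t : ℝ) - ((i : ℕ) : ℝ)) • v i, by
    refine continuous_const.add (continuous_finset_sum _ fun i _ => ?_)
    exact ((clamp01_continuous.comp
      ((continuous_const.mul continuous_subtype_val).sub continuous_const)).smul
      continuous_const)⟩

lemma pwLinE_zero {d : ℕ} (x : Ed d) (N : ℕ) (v : Fin N → Ed d) :
    pwLinE x N v 0 = x := by
  show x + ∑ i : Fin N, clamp01 ((N : ℝ) * ((0 : unitInterval) : ℝ) - ((i : ℕ) : ℝ)) • v i = x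
  have h : ∀ i : Fin N, clamp01 ((N : ℝ) * ((0 : unitInterval) : ℝ) - ((i : ℕ) : ℝ)) = 0 := by
    intro i
    apply clamp01_of_nonpos
    have h0 : ((0 : unitInterval) : ℝ) = 0 := rfl
    rw [h0, mul_zero, zero_sub]
    exact neg_nonpos.mpr (Nat.cast_nonneg (i : ℕ))
  simp only [h, zero_smul, Finset.sum_const_zero, add_zero]

lemma pwLinE_one {d : ℕ} (x : Ed d) (N : ℕ) (v : Fin N → Ed d) :
    pwLinE x N v 1 = x + ∑ i : Fin N, v i := by
  show x + ∑ i : Fin N, clamp01 ((N : ℝ) * ((1 : unitInterval) : ℝ) - ((i : ℕ) : ℝ)) • v i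
      = x + ∑ i : Fin N, v i
  have h : ∀ i : Fin N, clamp01 ((N : ℝ) * ((1 : unitInterval) : ℝ) - ((i : ℕ) : ℝ)) = 1 := by
    intro i
    apply clamp01_of_one_le
    have h1 : ((1 : unitInterval) : ℝ) = 1 := rfl
    have h2 : ((i : ℕ) : ℝ) + 1 ≤ (N : ℝ) := by
      exact_mod_cast Nat.succ_le_of_lt i.isLt
    rw [h1, mul_one]; linarith
  simp only [h, one_smul]

/-- Piecewise linear element of `Ω(x)` with increments `v`. -/
def pwLin1 {d : ℕ} (x : Ed d) (N : ℕ) (v : Fin N → Ed d) : Omega1 x :=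
  ⟨pwLinE x N v, pwLinE_zero x N v⟩

/-- Piecewise linear element of `Ω(x,y)` with increments `v` summing to `y - x`. -/
def pwLin2 {d : ℕ} (x y : Ed d) (N : ℕ) (v : Fin N → Ed d)
    (h : x + ∑ i : Fin N, v i = y) : Omega2 x y :=
  ⟨pwLinE x N v, pwLinE_zero x N v, by rw [pwLinE_one, h]⟩

/-- the point preceding `x_i` in the list `x, x_1, …, x_N`. -/
def prevPt {d : ℕ} (x : Ed d) {N : ℕ} (xs : Fin N → Ed d) (i : Fin N) : Ed d :=
  if (i : ℕ) = 0 then x else xs ⟨(i : ℕ) - 1, lt_of_le_of_lt (Nat.pred_le _) i.isLt⟩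

/-- The discrete measure `W_{x,a,N}`, i.e. the measure
`∏_{i=1}^N (2πa²)^{-d/2} exp(-|x_i - x_{i-1}|²/(2a²)) dx_1 … dx_N` (with `x_0 = x`)
on `N`-step piecewise linear paths, placed on `{a²N} × Ω(x) ⊆ ℝ × Ω(x)`.
For `N = 0` this is the Dirac measure at `(0, constant path at x)`. -/
def WxaN {d : ℕ} (x : Ed d) (a : ℝ) (N : ℕ) : Measure (ℝ × Omega1 x) :=
  Measure.map
    (fun xs : Fin N → Ed d =>
      ((a ^ 2 * N : ℝ), pwLin1 x N fun i => xs i - prevPt x xs i))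
    (volume.withDensity fun xs : Fin N → Ed d =>
      ENNReal.ofReal (∏ i : Fin N,
        (2 * π * a ^ 2) ^ (-(d : ℝ) / 2) *
          Real.exp (-‖xs i - prevPt x xs i‖ ^ 2 / (2 * a ^ 2))))

/-- The approximating probability measure
`W_{x,a} = (1 - e^{-m²a²/2}) Σ_{N=0}^∞ e^{-m²a²N/2} W_{x,a,N}`. -/
def Wxa {d : ℕ} (x : Ed d) (m a : ℝ) : Measure (ℝ × Omega1 x) :=
  ENNReal.ofReal (1 - Real.exp (-m ^ 2 * a ^ 2 / 2)) •
    Measure.sum fun N : ℕ =>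
      ENNReal.ofReal (Real.exp (-m ^ 2 * a ^ 2 * N / 2)) • WxaN x a N

/-- The lattice step of length `a` in direction `p.1`, forwards or backwards
according to `p.2`. -/
def stepVec {d : ℕ} (a : ℝ) (p : Fin d × Bool) : Ed d :=
  (if p.2 then a else -a) • EuclideanSpace.single p.1 (1 : ℝ)

/-- The normalized counting measure `V'_{x,a,N}` giving mass `(2d)^{-N}` to each
(piecewise linearly parametrized) `N`-step nearest-neighbour lattice path in `x + aℤ^d`
starting at `x`.  For `N = 0` it is the Dirac measure at the constant path. -/
def VxaN {d : ℕ} (x : Ed d) (a : ℝ) (N : ℕ) : Measure (Omega1 x) :=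
  Measure.sum fun s : Fin N → Fin d × Bool =>
    (((2 * d : ℕ) : ℝ≥0∞) ^ N)⁻¹ •
      Measure.dirac (pwLin1 x N fun i => stepVec a (s i))

/-- The approximating probability measure
`V'_{x,a} = (1 - e^{-m²a²/(2d)}) Σ_{N=0}^∞ e^{-m²a²N/(2d)} V'_{x,a,N}`. -/
def Vxa {d : ℕ} (x : Ed d) (m a : ℝ) : Measure (Omega1 x) :=
  ENNReal.ofReal (1 - Real.exp (-m ^ 2 * a ^ 2 / (2 * d))) •
    Measure.sum fun N : ℕ =>
      ENNReal.ofReal (Real.exp (-m ^ 2 * a ^ 2 * N / (2 * d))) • VxaN x a N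

/-- `Wt` is the family of Wiener measures `(W_x^t)_{t>0}` on `Ω(x)`:
each `W_x^t` is a Borel probability measure, characterized by the characteristic
functions of its finite dimensional distributions
`∫ exp(i Σ_j ξ_j·ω(t_j)) dW_x^t = exp(-(t/2) Σ_j (t_j - t_{j-1}) |ξ_j + ⋯ + ξ_n|²
+ i x·(ξ_1 + ⋯ + ξ_n))` for all `0 = t_0 < t_1 < ⋯ < t_n ≤ 1`. -/
def IsWienerFamily {d : ℕ} (x : Ed d) (Wt : ℝ → Measure (Omega1 x)) : Prop :=
  ∀ t : ℝ, 0 < t → (IsProbabilityMeasure (Wt t) ∧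
    ∀ (n : ℕ) (ts : ℕ → ℝ), ts 0 = 0 → (∀ i < n, ts i < ts (i + 1)) → ts n ≤ 1 →
      ∀ ξ : Fin n → Ed d,
        (∫ ω : Omega1 x, Complex.exp (Complex.I *
            ((∑ i : Fin n, ⟪ξ i, evalAt ω.1 (ts ((i : ℕ) + 1))⟫ : ℝ) : ℂ)) ∂(Wt t))
          = Complex.exp
              (((-(t / 2) * ∑ i : Fin n,
                  (ts ((i : ℕ) + 1) - ts (i : ℕ)) * ‖∑ j ∈ Finset.Ici i, ξ j‖ ^ 2 : ℝ) : ℂ)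
                + Complex.I * ((⟪∑ j, ξ j, x⟫ : ℝ) : ℂ)))

open ProbabilityTheory

section Gaussian

variable {E : Type*} [NormedAddCommGroup E] [InnerProductSpace ℝ E]

/-- The density of the centred Gaussian measure on `E` with covariance `a²` times the identity,
i.e. of the image of the standard Gaussian measure under the dilation by `a`. -/
def isotropicGaussianPDF (a : ℝ) (x : E) : ℝ :=
  (2 * π * a ^ 2) ^ (-(Module.finrank ℝ E : ℝ) / 2) * Real.exp (-‖x‖ ^ 2 / (2 * a ^ 2))

lemma isotropicGaussianPDF_nonneg (a : ℝ) (x : E) : 0 ≤ isotropicGaussianPDF a x := by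
  unfold isotropicGaussianPDF
  positivity

variable [FiniteDimensional ℝ E] [MeasurableSpace E] [BorelSpace E]

lemma integral_isotropicGaussianPDF_smul_cexp {a : ℝ} (ha : a ≠ 0) (η : E) :
    ∫ x : E, isotropicGaussianPDF a x • Complex.exp (⟪x, η⟫ * Complex.I) =
      Complex.exp (-‖a • η‖ ^ 2 / 2) := by
  have hb : 0 < (((2 * a ^ 2)⁻¹ : ℝ) : ℂ).re := by
    rw [Complex.ofReal_re]
    positivity
  have hnormalize : (2 * π * a ^ 2) ^ (-(Module.finrank ℝ E : ℝ) / 2) •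
      ((π : ℂ) / ((2 * a ^ 2)⁻¹ : ℝ)) ^ ((Module.finrank ℝ E : ℂ) / 2) = 1 := by
    have : (π : ℂ) / ((2 * a ^ 2)⁻¹ : ℝ) = (2 * π * a ^ 2 : ℝ) := by
      push_cast
      field_simp
    rw [this, ← Complex.ofReal_natCast, ← Complex.ofReal_ofNat, ← Complex.ofReal_div,
      ← Complex.ofReal_cpow (by positivity), Complex.real_smul, ← Complex.ofReal_mul,
      ← Real.rpow_add (by positivity), neg_div, neg_add_cancel, Real.rpow_zero, Complex.ofReal_one]
  calc ∫ x : E, isotropicGaussianPDF a x • Complex.exp (⟪x, η⟫ * Complex.I)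
      = ∫ x : E, (2 * π * a ^ 2) ^ (-(Module.finrank ℝ E : ℝ) / 2) •
          Complex.exp (-((2 * a ^ 2)⁻¹ : ℝ) * ‖x‖ ^ 2 + Complex.I * ⟪η, x⟫) := by
        refine integral_congr_ae (ae_of_all _ fun x => ?_)
        simp only [isotropicGaussianPDF, Complex.exp_add, mul_smul, real_inner_comm,
          Complex.real_smul, Complex.ofReal_exp, mul_comm Complex.I]
        congr 3
        push_cast
        ring
    _ = Complex.exp (Complex.I ^ 2 * ‖η‖ ^ 2 / (4 * ((2 * a ^ 2)⁻¹ : ℝ))) := by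
        rw [integral_smul, GaussianFourier.integral_cexp_neg_mul_sq_norm_add hb, ← smul_mul_assoc,
          hnormalize, one_mul]
    _ = Complex.exp (-‖a • η‖ ^ 2 / 2) := by
        congr 1
        rw [norm_smul, Real.norm_eq_abs]
        push_cast
        rw [mul_pow, ← Complex.ofReal_pow |a|, sq_abs, Complex.I_sq]
        have : (a : ℂ) ≠ 0 := by exact_mod_cast ha
        push_cast
        field_simp
        ring

lemma integral_isotropicGaussianPDF {a : ℝ} (ha : a ≠ 0) :
    ∫ x : E, isotropicGaussianPDF a x = 1 := by
  have h := integral_isotropicGaussianPDF_smul_cexp ha (0 : E)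
  simp only [inner_zero_right, Complex.ofReal_zero, zero_mul, Complex.exp_zero, smul_zero,
    norm_zero, ne_eq, OfNat.ofNat_ne_zero, not_false_eq_true, zero_pow, neg_zero, zero_div,
    Complex.real_smul, mul_one, integral_complex_ofReal] at h
  exact_mod_cast h

lemma integrable_isotropicGaussianPDF {a : ℝ} (ha : a ≠ 0) :
    Integrable (isotropicGaussianPDF a : E → ℝ) :=
  integrable_of_integral_eq_one (integral_isotropicGaussianPDF ha)

lemma map_smul_stdGaussian {a : ℝ} (ha : a ≠ 0) :
    (stdGaussian E).map (a • ·) =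
      volume.withDensity fun x => ENNReal.ofReal (isotropicGaussianPDF a x) := by
  have : IsFiniteMeasure (volume.withDensity fun x : E =>
      ENNReal.ofReal (isotropicGaussianPDF a x)) :=
    isFiniteMeasure_withDensity_ofReal (integrable_isotropicGaussianPDF ha).2
  refine Measure.ext_of_charFun (funext fun η => ?_)
  rw [charFun_map_smul, charFun_stdGaussian, charFun_apply,
    integral_withDensity_eq_integral_toReal_smul₀
      (integrable_isotropicGaussianPDF ha).1.aemeasurable.ennreal_ofReal
      (ae_of_all _ fun _ => ENNReal.ofReal_lt_top)]
  simp only [ENNReal.toReal_ofReal (isotropicGaussianPDF_nonneg a _)]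
  exact (integral_isotropicGaussianPDF_smul_cexp ha η).symm

end Gaussian

lemma pi_withDensity_ofReal {ι : Type*} [Fintype ι] {X : ι → Type*} [∀ i, MeasurableSpace (X i)]
    {μ : ∀ i, Measure (X i)} [∀ i, SigmaFinite (μ i)] {g : ∀ i, X i → ℝ}
    (hg : ∀ i, Integrable (g i) (μ i)) (hg0 : ∀ i x, 0 ≤ g i x) :
    (Measure.pi fun i => (μ i).withDensity fun x => ENNReal.ofReal (g i x)) =
      (Measure.pi μ).withDensity fun x => ENNReal.ofReal (∏ i, g i (x i)) := by
  refine Measure.pi_eq fun s hs => ?_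
  rw [withDensity_apply _ (MeasurableSet.univ_pi hs), Measure.restrict_pi_pi,
    ← ofReal_integral_eq_lintegral_ofReal
      (Integrable.fintype_prod_dep fun i => (hg i).restrict)
      (ae_of_all _ fun x => Finset.prod_nonneg fun i _ => hg0 i (x i)),
    integral_fintype_prod_eq_prod (𝕜 := ℝ) (f := g),
    ENNReal.ofReal_prod_of_nonneg fun i _ => integral_nonneg (hg0 i)]
  refine Finset.prod_congr rfl fun i _ => ?_
  rw [withDensity_apply _ (hs i), ofReal_integral_eq_lintegral_ofReal (hg i).restrict
    (ae_of_all _ (hg0 i))]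

section PolygonalPaths

lemma measurePreserving_one_sub_of_isNilpotent {V : Type*} [NormedAddCommGroup V]
    [NormedSpace ℝ V] [FiniteDimensional ℝ V] [MeasurableSpace V] [BorelSpace V]
    (μ : Measure V) [μ.IsAddHaarMeasure] {f : V →ₗ[ℝ] V} (hf : IsNilpotent f) :
    MeasurePreserving (1 - f : V →ₗ[ℝ] V) μ μ := by
  have hdet : LinearMap.det (1 - f) = 1 := by
    have h := LinearMap.eval_charpoly f 1
    rw [hf.charpoly_eq_X_pow_finrank] at h
    simpa using h.symm
  refine ⟨(LinearMap.continuous_of_finiteDimensional _).measurable, ?_⟩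
  rw [Measure.map_linearMap_addHaar_eq_smul_addHaar _ (hdet ▸ one_ne_zero), hdet]
  simp

lemma map_withDensity_comp_of_measurePreserving {X Y : Type*} [MeasurableSpace X]
    [MeasurableSpace Y] {μ : Measure X} {ν : Measure Y} {T : X → Y} (hT : MeasurePreserving T μ ν)
    {g : Y → ℝ≥0∞} (hg : Measurable g) :
    (μ.withDensity (g ∘ T)).map T = ν.withDensity g := by
  ext s hs
  rw [Measure.map_apply hT.measurable hs, withDensity_apply _ hs,
    withDensity_apply _ (hT.measurable hs)]
  exact hT.setLIntegral_comp_preimage hs hg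

variable {d : ℕ}

/-- The linear shift `(x_1, …, x_N) ↦ (0, x_1, …, x_{N-1})`, i.e. the map `x ↦ prevPt 0 x`. -/
def shiftMap (d N : ℕ) : (Fin N → Ed d) →ₗ[ℝ] (Fin N → Ed d) where
  toFun xs := prevPt 0 xs
  map_add' u v := by
    funext i
    by_cases h : (i : ℕ) = 0 <;> simp [prevPt, h]
  map_smul' c u := by
    funext i
    by_cases h : (i : ℕ) = 0 <;> simp [prevPt, h]

lemma isNilpotent_shiftMap (d N : ℕ) : IsNilpotent (shiftMap d N) := by
  have pow_apply_eq_zero : ∀ (k : ℕ) (v : Fin N → Ed d) (i : Fin N), (i : ℕ) < k →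
      (shiftMap d N ^ k) v i = 0 := by
    intro k
    induction k with
    | zero => exact fun v i hi => absurd hi (Nat.not_lt_zero _)
    | succ k ih =>
      intro v i hi
      rw [pow_succ', Module.End.mul_apply]
      change prevPt 0 _ i = 0
      unfold prevPt
      split_ifs with h0
      · rfl
      · exact ih v _ (by simp only; omega)
  exact ⟨N, LinearMap.ext fun v => funext fun i => pow_apply_eq_zero N v i i.isLt⟩

lemma measurePreserving_sub_prevPt (x : Ed d) (N : ℕ) :
    MeasurePreserving fun (xs : Fin N → Ed d) i => xs i - prevPt x xs i := by
  have hshift := measurePreserving_one_sub_of_isNilpotent volume (isNilpotent_shiftMap d N)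
  have htranslate := measurePreserving_add_right (volume : Measure (Fin N → Ed d))
    fun i => if (i : ℕ) = 0 then -x else 0
  convert! htranslate.comp hshift using 1
  funext xs i
  change xs i - prevPt x xs i = (xs i - prevPt 0 xs i) + (if (i : ℕ) = 0 then -x else 0)
  by_cases h : (i : ℕ) = 0 <;> simp [prevPt, h, sub_eq_add_neg]

lemma continuous_pwLinE (x : Ed d) (N : ℕ) : Continuous (pwLinE x N) := by
  refine ContinuousMap.continuous_of_continuous_uncurry _ ?_
  change Continuous fun p : (Fin N → Ed d) × unitInterval =>
    x + ∑ i : Fin N, clamp01 ((N : ℝ) * (p.2 : ℝ) - ((i : ℕ) : ℝ)) • p.1 i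
  have := clamp01_continuous
  fun_prop

lemma continuous_pwLin1 (x : Ed d) (N : ℕ) : Continuous (pwLin1 x N) :=
  (continuous_pwLinE x N).subtype_mk _

lemma pwLinE_smul (x : Ed d) (N : ℕ) (r : ℝ) (v : Fin N → Ed d) :
    pwLinE x N (r • v) =
      ContinuousMap.const _ x + r • (pwLinE x N v - ContinuousMap.const _ x) := by
  ext1 t
  change x + ∑ i : Fin N, clamp01 (N * t - i) • (r • v i) =
    x + r • (x + ∑ i : Fin N, clamp01 (N * t - i) • v i - x)
  simp only [add_sub_cancel_left, Finset.smul_sum, smul_comm r]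

lemma pi_map_smul_stdGaussian (d N : ℕ) {a : ℝ} (ha : a ≠ 0) :
    (Measure.pi fun _ : Fin N => stdGaussian (Ed d)).map (a • ·) =
      volume.withDensity fun v : Fin N → Ed d =>
        ENNReal.ofReal (∏ i, isotropicGaussianPDF a (v i)) := by
  rw [volume_pi, ← pi_withDensity_ofReal (fun _ => integrable_isotropicGaussianPDF ha)
    fun _ => isotropicGaussianPDF_nonneg a]
  simp only [← map_smul_stdGaussian ha]
  exact Measure.pi_map_pi fun _ => (measurable_const_smul a).aemeasurable

lemma WxaN_eq_map_pi_stdGaussian (x : Ed d) {a : ℝ} (ha : a ≠ 0) (N : ℕ) :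
    WxaN x a N = (Measure.pi fun _ : Fin N => stdGaussian (Ed d)).map
      fun v => (a ^ 2 * N, pwLin1 x N (a • v)) := by
  have hpath : Measurable fun v : Fin N → Ed d => (a ^ 2 * N, pwLin1 x N v) :=
    (continuous_const.prodMk (continuous_pwLin1 x N)).measurable
  have hdensity : Measurable fun v : Fin N → Ed d =>
      ENNReal.ofReal (∏ i, isotropicGaussianPDF a (v i)) := by
    unfold isotropicGaussianPDF
    fun_prop
  have hdiff := measurePreserving_sub_prevPt x N
  calc WxaN x a N
      = ((volume.withDensity fun xs : Fin N → Ed d => ENNReal.ofReal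
          (∏ i, isotropicGaussianPDF a (xs i - prevPt x xs i))).map
            fun xs i => xs i - prevPt x xs i).map fun v => (a ^ 2 * N, pwLin1 x N v) := by
        rw [Measure.map_map hpath hdiff.measurable]
        simp only [WxaN, isotropicGaussianPDF, finrank_euclideanSpace_fin, Function.comp_def]
    _ = ((Measure.pi fun _ : Fin N => stdGaussian (Ed d)).map (a • ·)).map
          fun v => (a ^ 2 * N, pwLin1 x N v) := by
        rw [pi_map_smul_stdGaussian d N ha,
          ← map_withDensity_comp_of_measurePreserving hdiff hdensity]
        rfl
    _ = _ := Measure.map_map hpath (measurable_const_smul a)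

lemma isProbabilityMeasure_WxaN (x : Ed d) {a : ℝ} (ha : a ≠ 0) (N : ℕ) :
    IsProbabilityMeasure (WxaN x a N) := by
  rw [WxaN_eq_map_pi_stdGaussian x ha]
  exact Measure.isProbabilityMeasure_map (continuous_const.prodMk
    ((continuous_pwLin1 x N).comp (continuous_const_smul a))).aemeasurable

end PolygonalPaths

section Increments

lemma sum_Ici_fin_sub {G : Type*} [AddCommGroup G] (F : ℕ → G) {n : ℕ} (i : Fin n) :
    ∑ j ∈ Finset.Ici i, (F j - F (j + 1)) = F i - F n := by
  have h : ∑ j ∈ Finset.Ici i, (F j - F (j + 1)) =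
      ∑ k ∈ Finset.Ico (i : ℕ) n, (F k - F (k + 1)) := by
    rw [← Fin.map_valEmbedding_Ici, Finset.sum_map]
    rfl
  rw [h, ← neg_inj, ← Finset.sum_neg_distrib]
  simp only [neg_sub]
  exact Finset.sum_Ico_sub F i.isLt.le

lemma sum_range_inner_sub_eq_sum_range_inner {E : Type*} [NormedAddCommGroup E]
    [InnerProductSpace ℝ E] (F w : ℕ → E) (n : ℕ) :
    ∑ i ∈ Finset.range n, ⟪F i - F (i + 1), w (i + 1)⟫ =
      ∑ i ∈ Finset.range n, ⟪F i, w (i + 1) - w i⟫ + ⟪F 0, w 0⟫ - ⟪F n, w n⟫ := by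
  induction n with
  | zero => simp
  | succ n ih =>
    rw [Finset.sum_range_succ, Finset.sum_range_succ, ih, inner_sub_left, inner_sub_right]
    ring

variable {d : ℕ}

/-- The increments `ω(t_{i+1}) - ω(t_i)`, `i < n`, of a path along a sequence of times. -/
def increments (ts : ℕ → ℝ) (n : ℕ) (ω : PathSp d) (i : Fin n) : Ed d :=
  evalAt ω (ts (i + 1)) - evalAt ω (ts i)

lemma continuous_increments (ts : ℕ → ℝ) (n : ℕ) :
    Continuous (increments (d := d) ts n) := by
  unfold increments evalAt
  fun_prop

lemma evalAt_zero (ω : PathSp d) : evalAt ω 0 = ω 0 := by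
  rw [evalAt, projIcc_left]
  rfl

variable {x : Ed d} {Wt : ℝ → Measure (Omega1 x)} {t : ℝ}

lemma IsWienerFamily.integral_cexp_increments (hWt : IsWienerFamily x Wt) (ht : 0 < t) {n : ℕ}
    {ts : ℕ → ℝ} (hts0 : ts 0 = 0) (hts : ∀ i < n, ts i < ts (i + 1)) (htsn : ts n ≤ 1)
    (η : Fin n → Ed d) :
    ∫ ω, Complex.exp (Complex.I * (∑ i, ⟪η i, increments ts n ω.1 i⟫ : ℝ)) ∂(Wt t) =
      Complex.exp (-(t / 2) * ∑ i : Fin n, (ts (i + 1) - ts i) * ‖η i‖ ^ 2 : ℝ) := by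
  let F : ℕ → Ed d := fun k => if h : k < n then η ⟨k, h⟩ else 0
  have hF : ∀ i : Fin n, F i = η i := fun i => by simp [F]
  have hFn : F n = 0 := by simp [F]
  have habel : ∀ ω : Omega1 x, ∑ i : Fin n, ⟪F i - F (i + 1), evalAt ω.1 (ts (i + 1))⟫ =
      ∑ i, ⟪η i, increments ts n ω.1 i⟫ + ⟪F 0, x⟫ := by
    intro ω
    rw [Fin.sum_univ_eq_sum_range (fun k => ⟪F k - F (k + 1), evalAt ω.1 (ts (k + 1))⟫) n,
      sum_range_inner_sub_eq_sum_range_inner F (fun k => evalAt ω.1 (ts k)) n, hFn,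
      inner_zero_left, sub_zero, hts0, evalAt_zero, ω.2,
      ← Fin.sum_univ_eq_sum_range
        (fun k => ⟪F k, evalAt ω.1 (ts (k + 1)) - evalAt ω.1 (ts k)⟫) n]
    simp only [hF, increments]
  have hsum : ∑ j : Fin n, (F j - F (j + 1)) = F 0 := by
    rw [Fin.sum_univ_eq_sum_range (fun k => F k - F (k + 1)) n, Finset.sum_range_sub', hFn,
      sub_zero]
  have hchar := (hWt t ht).2 n ts hts0 hts htsn fun i => F i - F (i + 1)
  simp only [habel, sum_Ici_fin_sub, hFn, sub_zero, hsum, Complex.exp_add, Complex.ofReal_add,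
    mul_add, integral_mul_const] at hchar
  simp only [hF] at hchar
  exact mul_right_cancel₀ (Complex.exp_ne_zero _) hchar

lemma IsWienerFamily.map_increments (hWt : IsWienerFamily x Wt) (ht : 0 < t) {n : ℕ}
    {ts : ℕ → ℝ} (hts0 : ts 0 = 0) (hts : ∀ i < n, ts i < ts (i + 1)) (htsn : ts n ≤ 1) :
    (Wt t).map (fun ω => increments ts n ω.1) =
      Measure.pi fun i : Fin n => (stdGaussian (Ed d)).map (√(t * (ts (i + 1) - ts i)) • ·) := by
  have := (hWt t ht).1
  have hmeas : Measurable fun ω : Omega1 x => increments ts n ω.1 :=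
    ((continuous_increments ts n).comp continuous_subtype_val).measurable
  have := Measure.isProbabilityMeasure_map (μ := Wt t) hmeas.aemeasurable
  have (i : Fin n) : IsProbabilityMeasure
      ((stdGaussian (Ed d)).map (√(t * (ts (i + 1) - ts i)) • ·)) :=
    Measure.isProbabilityMeasure_map (measurable_const_smul _).aemeasurable
  refine charFun_eq_pi_iff.1 fun η => ?_
  have hvariance (i : Fin n) : ‖√(t * (ts (i + 1) - ts i)) • η i‖ ^ 2 =
      t * ((ts (i + 1) - ts i) * ‖η i‖ ^ 2) := by
    rw [norm_smul, mul_pow, Real.norm_eq_abs, sq_abs,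
      Real.sq_sqrt (mul_nonneg ht.le (sub_nonneg.2 (hts i i.isLt).le)), mul_assoc]
  calc charFun _ η
      = ∫ ω, Complex.exp (Complex.I * (∑ i, ⟪η i, increments ts n ω.1 i⟫ : ℝ)) ∂(Wt t) := by
        rw [charFun_apply, integral_map (by fun_prop) (by fun_prop),
          integral_map hmeas.aemeasurable (by fun_prop)]
        refine integral_congr_ae (ae_of_all _ fun ω => ?_)
        simp only
        rw [PiLp.inner_apply, mul_comm]
        simp only [real_inner_comm]
    _ = ∏ i : Fin n, Complex.exp (-‖√(t * (ts (i + 1) - ts i)) • η i‖ ^ 2 / 2) := by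
        rw [hWt.integral_cexp_increments ht hts0 hts htsn, ← Complex.exp_sum, Finset.mul_sum,
          Complex.ofReal_sum]
        congr! 2 with i
        rw [← Complex.ofReal_pow, hvariance]
        push_cast
        ring
    _ = ∏ i, charFun _ (η i) := by simp only [charFun_map_smul, charFun_stdGaussian]

/-- The times `i / N` at which the `N`-step polygonal paths of `WxaN` have their vertices. -/
def uniformGrid (N i : ℕ) : ℝ := i / N

lemma uniformGrid_zero (N : ℕ) : uniformGrid N 0 = 0 := by simp [uniformGrid]

lemma uniformGrid_succ_sub (N i : ℕ) : uniformGrid N (i + 1) - uniformGrid N i = 1 / N := by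
  simp only [uniformGrid, Nat.cast_add_one]
  ring

lemma IsWienerFamily.map_increments_uniformGrid (hWt : IsWienerFamily x Wt) (ht : 0 < t) {N : ℕ}
    (hN : 0 < N) :
    (Wt t).map (fun ω => increments (uniformGrid N) N ω.1) =
      (Measure.pi fun _ : Fin N => stdGaussian (Ed d)).map (√(t / N) • ·) := by
  have hN' : (0 : ℝ) < N := Nat.cast_pos.2 hN
  rw [hWt.map_increments ht (uniformGrid_zero N)
    (fun i _ => sub_pos.1 (uniformGrid_succ_sub N i ▸ by positivity)) (div_self hN'.ne').le]
  simp only [uniformGrid_succ_sub, mul_one_div]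
  exact Measure.pi_map_pi (fun _ => (measurable_const_smul _).aemeasurable)|>.symm

lemma IsWienerFamily.WxaN_eq_map (hWt : IsWienerFamily x Wt) (ht : 0 < t) {a : ℝ} (ha : 0 < a)
    {N : ℕ} (hN : 0 < N) :
    WxaN x a N = (Wt t).map fun ω =>
      (a ^ 2 * N, pwLin1 x N (√(a ^ 2 * N / t) • increments (uniformGrid N) N ω.1)) := by
  have hN' : (0 : ℝ) < N := Nat.cast_pos.2 hN
  have hpath : Measurable fun v : Fin N → Ed d =>
      (a ^ 2 * N, pwLin1 x N (√(a ^ 2 * N / t) • v)) :=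
    (continuous_const.prodMk ((continuous_pwLin1 x N).comp (continuous_const_smul _))).measurable
  have hscale : √(a ^ 2 * N / t) * √(t / N) = a := by
    rw [← Real.sqrt_mul (by positivity), div_mul_div_cancel₀ ht.ne', mul_div_assoc,
      div_self hN'.ne', mul_one, Real.sqrt_sq ha.le]
  calc WxaN x a N
      = ((Measure.pi fun _ : Fin N => stdGaussian (Ed d)).map (√(t / N) • ·)).map fun v =>
          (a ^ 2 * N, pwLin1 x N (√(a ^ 2 * N / t) • v)) := by
        rw [Measure.map_map hpath (measurable_const_smul _), WxaN_eq_map_pi_stdGaussian x ha.ne']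
        simp only [Function.comp_def, smul_smul, hscale]
    _ = _ := by
        rw [← hWt.map_increments_uniformGrid ht hN]
        exact Measure.map_map hpath
          ((continuous_increments _ N).comp continuous_subtype_val).measurable

end Increments

section Interpolation

lemma sum_clamp01_smul_sub {E : Type*} [AddCommGroup E] [Module ℝ E] (w : ℕ → E) {n j : ℕ}
    (hj : j < n) {s : ℝ} (hs : s ∈ Icc (j : ℝ) (j + 1)) :
    ∑ i ∈ Finset.range n, clamp01 (s - i) • (w (i + 1) - w i) =
      w j - w 0 + (s - j) • (w (j + 1) - w j) := by
  obtain ⟨hjs, hsj⟩ := hs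
  rw [← Finset.sum_subset (Finset.range_mono (Nat.succ_le_of_lt hj)), Finset.sum_range_succ]
  · congr 1
    · rw [← Finset.sum_range_sub]
      refine Finset.sum_congr rfl fun i hi => ?_
      have : (i : ℝ) + 1 ≤ j := by exact_mod_cast Finset.mem_range.1 hi
      rw [clamp01_of_one_le (by linarith), one_smul]
    · rw [clamp01, max_eq_right (by linarith), min_eq_right (by linarith)]
  · intro i _ hi
    have : (j : ℝ) + 1 ≤ i := by exact_mod_cast not_lt.1 (mt Finset.mem_range.2 hi)
    rw [clamp01_of_nonpos (by linarith), zero_smul]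

lemma exists_nat_lt_mem_Icc {N : ℕ} (hN : 0 < N) {s : ℝ} (hs : s ∈ Icc (0 : ℝ) N) :
    ∃ j < N, s ∈ Icc (j : ℝ) (j + 1) := by
  rcases hs.2.eq_or_lt with rfl | hlt
  · refine ⟨N - 1, Nat.sub_lt hN one_pos, ?_⟩
    rw [Nat.cast_pred hN]
    constructor <;> linarith
  · exact ⟨⌊s⌋₊, (Nat.floor_lt hs.1).2 hlt, Nat.floor_le hs.1, (Nat.lt_floor_add_one s).le⟩

lemma dist_projIcc_uniformGrid_le {N k : ℕ} (hN : 0 < N) (hk : k ≤ N) {t : unitInterval}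
    (hkt : |(k - N * t : ℝ)| ≤ 1) :
    dist (projIcc 0 1 zero_le_one (uniformGrid N k)) t ≤ 1 / N := by
  have hN' : (0 : ℝ) < N := Nat.cast_pos.2 hN
  have hmem : uniformGrid N k ∈ Icc (0 : ℝ) 1 :=
    ⟨by unfold uniformGrid; positivity, div_le_one_of_le₀ (Nat.cast_le.2 hk) hN'.le⟩
  have hsub : uniformGrid N k - t = (k - N * t) / N := by
    unfold uniformGrid
    field_simp
  rw [projIcc_of_mem zero_le_one hmem, Subtype.dist_eq, Real.dist_eq, hsub, abs_div,
    abs_of_pos hN']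
  gcongr

variable {d : ℕ}

lemma exists_pwLinE_increments_mem_segment (ω : PathSp d) {N : ℕ} (hN : 0 < N)
    (t : unitInterval) :
    ∃ s₁ s₂ : unitInterval, dist s₁ t ≤ 1 / N ∧ dist s₂ t ≤ 1 / N ∧
      pwLinE (ω 0) N (increments (uniformGrid N) N ω) t ∈ segment ℝ (ω s₁) (ω s₂) := by
  have hN' : (0 : ℝ) < N := Nat.cast_pos.2 hN
  obtain ⟨j, hjN, hj⟩ := exists_nat_lt_mem_Icc hN (s := N * t)
    ⟨mul_nonneg hN'.le t.2.1, mul_le_of_le_one_right hN'.le t.2.2⟩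
  let w : ℕ → Ed d := fun k => evalAt ω (uniformGrid N k)
  have hw0 : w 0 = ω 0 := by simp only [w, uniformGrid_zero, evalAt_zero]
  have hvalue : pwLinE (ω 0) N (increments (uniformGrid N) N ω) t =
      (1 - (N * t - j) : ℝ) • w j + (N * t - j : ℝ) • w (j + 1) := by
    change ω 0 + ∑ i : Fin N, clamp01 (N * t - (i : ℕ)) • (w (i + 1) - w i) = _
    rw [Fin.sum_univ_eq_sum_range (fun i => clamp01 (N * t - i) • (w (i + 1) - w i)) N,
      sum_clamp01_smul_sub w hjN hj, hw0]
    module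
  refine ⟨_, _, dist_projIcc_uniformGrid_le hN hjN.le ?_, dist_projIcc_uniformGrid_le hN hjN ?_,
    (1 - (N * t - j) : ℝ), (N * t - j : ℝ), by linarith [hj.2], by linarith [hj.1], by ring,
    hvalue.symm⟩
  · rw [abs_le]
    constructor <;> linarith [hj.1, hj.2]
  · rw [abs_le]
    push_cast
    constructor <;> linarith [hj.1, hj.2]

lemma tendsto_pwLinE_increments (ω : PathSp d) :
    Tendsto (fun N => pwLinE (ω 0) N (increments (uniformGrid N) N ω)) atTop (𝓝 ω) := by
  rw [Metric.tendsto_atTop]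
  intro ε hε
  obtain ⟨δ, hδ, hω⟩ := Metric.uniformContinuous_iff.1
    (CompactSpace.uniformContinuous_of_continuous ω.continuous) ε hε
  obtain ⟨n, hn⟩ := exists_nat_one_div_lt hδ
  refine ⟨n + 1, fun N hN => (ContinuousMap.dist_lt_iff hε).2 fun t => ?_⟩
  have hNδ : 1 / (N : ℝ) < δ := lt_of_le_of_lt (by gcongr; exact_mod_cast hN) hn
  obtain ⟨s₁, s₂, h₁, h₂, hmem⟩ :=
    exists_pwLinE_increments_mem_segment ω (n.succ_pos.trans_le hN) t
  exact (convex_ball (ω t) ε).segment_subset (hω (h₁.trans_lt hNδ)) (hω (h₂.trans_lt hNδ)) hmem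

variable {ι : Type*} {l : Filter ι} {x : Ed d}

lemma tendsto_pwLin1_smul_increments (ω : Omega1 x) {N : ι → ℕ} {r : ι → ℝ}
    (hN : Tendsto N l atTop) (hr : Tendsto r l (𝓝 1)) :
    Tendsto (fun i => pwLin1 x (N i) (r i • increments (uniformGrid (N i)) (N i) ω.1)) l
      (𝓝 ω) := by
  have hpoly : Tendsto (fun i => pwLinE x (N i) (increments (uniformGrid (N i)) (N i) ω.1)) l
      (𝓝 ω.1) := by
    have := (tendsto_pwLinE_increments ω.1).comp hN
    rwa [ω.2] at this
  have h := (hr.smul (hpoly.sub_const (ContinuousMap.const _ x))).const_add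
    (ContinuousMap.const _ x)
  rw [one_smul, add_sub_cancel] at h
  rw [tendsto_subtype_rng]
  simpa only [pwLin1, pwLinE_smul] using h

lemma IsWienerFamily.tendsto_integral_WxaN {F : Type*} [NormedAddCommGroup F] [NormedSpace ℝ F]
    {Wt : ℝ → Measure (Omega1 x)} (hWt : IsWienerFamily x Wt) [l.IsCountablyGenerated]
    (f : BoundedContinuousFunction (ℝ × Omega1 x) F) {t : ℝ} (ht : 0 < t) {a : ι → ℝ} {N : ι → ℕ}
    (ha : ∀ᶠ i in l, 0 < a i) (hN : Tendsto N l atTop)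
    (haN : Tendsto (fun i => a i ^ 2 * N i) l (𝓝 t)) :
    Tendsto (fun i => ∫ p, f p ∂(WxaN x (a i) (N i))) l (𝓝 (∫ ω, f (t, ω) ∂(Wt t))) := by
  have := (hWt t ht).1
  let path (i : ι) (ω : Omega1 x) : ℝ × Omega1 x := (a i ^ 2 * N i,
    pwLin1 x (N i) (√(a i ^ 2 * N i / t) • increments (uniformGrid (N i)) (N i) ω.1))
  have hpath (i : ι) : Continuous (path i) :=
    continuous_const.prodMk ((continuous_pwLin1 x _).comp ((continuous_const_smul _).comp
      ((continuous_increments _ _).comp continuous_subtype_val)))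
  have hscale : Tendsto (fun i => √(a i ^ 2 * N i / t)) l (𝓝 1) := by
    simpa [div_self ht.ne'] using (haN.div_const t).sqrt
  have hlim : Tendsto (fun i => ∫ ω, f (path i ω) ∂(Wt t)) l (𝓝 (∫ ω, f (t, ω) ∂(Wt t))) :=
    tendsto_integral_filter_of_dominated_convergence (fun _ => ‖f‖)
      (.of_forall fun i => (f.continuous.comp (hpath i)).aestronglyMeasurable)
      (.of_forall fun i => ae_of_all _ fun ω => f.norm_coe_le_norm _) (integrable_const _)
      (ae_of_all _ fun ω => (f.continuous.tendsto _).comp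
        (haN.prodMk_nhds (tendsto_pwLin1_smul_increments ω hN hscale)))
  refine hlim.congr' ?_
  filter_upwards [ha, hN.eventually_gt_atTop 0] with i hai hNi
  rw [hWt.WxaN_eq_map ht hai hNi, integral_map (hpath i).aemeasurable
    f.continuous.aestronglyMeasurable]

end Interpolation

section ExponentialMixture

lemma expMeasure_eq_withDensity (r : ℝ) :
    expMeasure r = (volume.restrict (Ioi 0)).withDensity
      fun t => ENNReal.ofReal (r * Real.exp (-(r * t))) := by
  have hdensity : exponentialPDF r =
      (Ici 0).indicator fun t => ENNReal.ofReal (r * Real.exp (-(r * t))) := by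
    ext t
    by_cases ht : 0 ≤ t <;> simp [exponentialPDF_eq, ht]
  rw [restrict_Ioi_eq_restrict_Ici, ← withDensity_indicator measurableSet_Ici, ← hdensity]
  rfl

lemma ae_expMeasure_pos (r : ℝ) : ∀ᵐ t ∂(expMeasure r), 0 < t := by
  rw [expMeasure_eq_withDensity]
  exact (withDensity_absolutelyContinuous _ _).ae_le (ae_restrict_mem measurableSet_Ioi)

lemma integral_expMeasure {r : ℝ} (hr : 0 ≤ r) {F : Type*} [NormedAddCommGroup F]
    [NormedSpace ℝ F] (g : ℝ → F) :
    ∫ t, g t ∂(expMeasure r) = r • ∫ t in Ioi 0, Real.exp (-(r * t)) • g t := by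
  rw [expMeasure_eq_withDensity, integral_withDensity_eq_integral_toReal_smul (by fun_prop)
    (ae_of_all _ fun _ => ENNReal.ofReal_lt_top), ← integral_smul]
  refine integral_congr_ae (ae_of_all _ fun t => ?_)
  simp only
  rw [ENNReal.toReal_ofReal (by positivity), mul_smul]

lemma expMeasure_Ioc {r : ℝ} (hr : 0 < r) {u v : ℝ} (hu : 0 ≤ u) (hv : 0 ≤ v) :
    expMeasure r (Ioc u v) = ENNReal.ofReal (Real.exp (-(r * u)) - Real.exp (-(r * v))) := by
  have := isProbabilityMeasure_expMeasure hr
  rw [← measure_cdf (expMeasure r), StieltjesFunction.measure_Ioc, cdf_expMeasure_eq hr,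
    cdf_expMeasure_eq hr, if_pos hu, if_pos hv, sub_sub_sub_cancel_left]

lemma natFloor_div_eq_iff {b t : ℝ} (hb : 0 < b) (ht : 0 ≤ t) (N : ℕ) :
    ⌊t / b⌋₊ = N ↔ t ∈ Ico (b * N) (b * (N + 1)) := by
  rw [Nat.floor_eq_iff (by positivity), le_div_iff₀ hb, div_lt_iff₀ hb, mul_comm b, mul_comm b,
    mem_Ico]

lemma map_natFloor_div_expMeasure_singleton {r b : ℝ} (hr : 0 < r) (hb : 0 < b) (N : ℕ) :
    (expMeasure r).map (fun t => ⌊t / b⌋₊) {N} =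
      ENNReal.ofReal ((1 - Real.exp (-(r * b))) * Real.exp (-(r * (b * N)))) := by
  have hnull : NullSingletonClass (expMeasure r) := by
    unfold expMeasure gammaMeasure
    infer_instance
  have hfibre : (fun t => ⌊t / b⌋₊) ⁻¹' {N} =ᵐ[expMeasure r] Ico (b * N) (b * (N + 1)) := by
    filter_upwards [ae_expMeasure_pos r] with t ht
    exact propext (natFloor_div_eq_iff hb ht.le N)
  rw [Measure.map_apply (by fun_prop) (measurableSet_singleton N),
    measure_congr (hfibre.trans Ico_ae_eq_Ioc), expMeasure_Ioc hr (by positivity) (by positivity),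
    one_sub_mul, ← Real.exp_add]
  ring_nf

variable {d : ℕ} (x : Ed d) {m a : ℝ}

lemma Wxa_eq_comp_map_expMeasure (hm : m ≠ 0) (ha : a ≠ 0) :
    Wxa x m a = Kernel.ofFunOfCountable (WxaN x a) ∘ₘ
      (expMeasure (m ^ 2 / 2)).map fun t => ⌊t / a ^ 2⌋₊ := by
  have hexp : Real.exp (-m ^ 2 * a ^ 2 / 2) ≤ 1 := by
    rw [Real.exp_le_one_iff]
    have : 0 ≤ m ^ 2 * a ^ 2 := by positivity
    linarith
  have hmass (N : ℕ) : (expMeasure (m ^ 2 / 2)).map (fun t => ⌊t / a ^ 2⌋₊) {N} =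
      ENNReal.ofReal (1 - Real.exp (-m ^ 2 * a ^ 2 / 2)) *
        ENNReal.ofReal (Real.exp (-m ^ 2 * a ^ 2 * N / 2)) := by
    rw [map_natFloor_div_expMeasure_singleton (by positivity) (by positivity),
      ← ENNReal.ofReal_mul (sub_nonneg.2 hexp)]
    ring_nf
  rw [Measure.comp_eq_sum_of_countable, Wxa]
  ext s hs
  simp only [Measure.smul_apply, Measure.sum_apply _ hs, hmass, smul_eq_mul, mul_assoc,
    ENNReal.tsum_mul_left]
  rfl

lemma integral_Wxa (hm : m ≠ 0) (ha : a ≠ 0) {F : Type*} [NormedAddCommGroup F] [NormedSpace ℝ F]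
    (f : BoundedContinuousFunction (ℝ × Omega1 x) F) :
    ∫ p, f p ∂(Wxa x m a) =
      ∫ t, ∫ p, f p ∂(WxaN x a ⌊t / a ^ 2⌋₊) ∂(expMeasure (m ^ 2 / 2)) := by
  have := isProbabilityMeasure_expMeasure (r := m ^ 2 / 2) (by positivity)
  have hfloor : Measurable fun t : ℝ => ⌊t / a ^ 2⌋₊ := by fun_prop
  have := Measure.isProbabilityMeasure_map (μ := expMeasure (m ^ 2 / 2)) hfloor.aemeasurable
  have : IsMarkovKernel (Kernel.ofFunOfCountable (WxaN x a)) := ⟨isProbabilityMeasure_WxaN x ha⟩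
  have hint {μ : Measure (ℝ × Omega1 x)} [IsFiniteMeasure μ] : Integrable f μ :=
    (integrable_const ‖f‖).mono' f.continuous.aestronglyMeasurable
      (ae_of_all _ f.norm_coe_le_norm)
  rw [Wxa_eq_comp_map_expMeasure x hm ha, Measure.comp_eq_comp_const_apply,
    Kernel.integral_comp hint, Kernel.const_apply, integral_map hfloor.aemeasurable
    StronglyMeasurable.of_discrete.aestronglyMeasurable]
  rfl

end ExponentialMixture

section Limit

lemma tendsto_const_div_nhdsGT_zero {t : ℝ} (ht : 0 < t) :
    Tendsto (fun b : ℝ => t / b) (𝓝[>] 0) atTop :=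
  tendsto_inv_nhdsGT_zero.const_mul_atTop ht

lemma tendsto_mul_natFloor_div_nhdsGT_zero {t : ℝ} (ht : 0 < t) :
    Tendsto (fun b : ℝ => b * ⌊t / b⌋₊) (𝓝[>] 0) (𝓝 t) := by
  have h := (tendsto_nat_floor_div_atTop.comp (tendsto_const_div_nhdsGT_zero ht)).const_mul t
  rw [mul_one] at h
  refine h.congr' ?_
  filter_upwards [self_mem_nhdsWithin] with b hb
  have : b ≠ 0 := (mem_Ioi.1 hb).ne'
  simp only [Function.comp_apply]
  field_simp

lemma tendsto_sq_nhdsGT_zero : Tendsto (fun a : ℝ => a ^ 2) (𝓝[>] 0) (𝓝[>] 0) := by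
  refine tendsto_nhdsWithin_iff.2 ⟨?_, ?_⟩
  · exact ((continuous_pow 2).tendsto' (0 : ℝ) 0 (by simp)).mono_left nhdsWithin_le_nhds
  · filter_upwards [self_mem_nhdsWithin] with a ha using pow_pos (mem_Ioi.1 ha) 2

lemma IsWienerFamily.tendsto_integral_expMeasure_WxaN {d : ℕ} {x : Ed d}
    {Wt : ℝ → Measure (Omega1 x)} (hWt : IsWienerFamily x Wt) {r : ℝ} (hr : 0 < r) {F : Type*}
    [NormedAddCommGroup F] [NormedSpace ℝ F] (f : BoundedContinuousFunction (ℝ × Omega1 x) F) :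
    Tendsto (fun a => ∫ t, ∫ p, f p ∂(WxaN x a ⌊t / a ^ 2⌋₊) ∂(expMeasure r)) (𝓝[>] 0)
      (𝓝 (∫ t, ∫ ω, f (t, ω) ∂(Wt t) ∂(expMeasure r))) := by
  have := isProbabilityMeasure_expMeasure hr
  refine tendsto_integral_filter_of_dominated_convergence (fun _ => ‖f‖)
    (.of_forall fun a => ?_) ?_ (integrable_const _) ?_
  · have hN : StronglyMeasurable fun N => ∫ p, f p ∂(WxaN x a N) := .of_discrete
    exact (hN.comp_measurable (by fun_prop)).aestronglyMeasurable
  · filter_upwards [self_mem_nhdsWithin] with a ha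
    refine ae_of_all _ fun t => ?_
    have := isProbabilityMeasure_WxaN x (mem_Ioi.1 ha).ne' ⌊t / a ^ 2⌋₊
    exact (norm_integral_le_of_norm_le_const (ae_of_all _ f.norm_coe_le_norm)).trans_eq
      (by rw [probReal_univ, mul_one])
  · filter_upwards [ae_expMeasure_pos r] with t ht
    exact hWt.tendsto_integral_WxaN f ht self_mem_nhdsWithin
      (tendsto_nat_floor_atTop.comp
        ((tendsto_const_div_nhdsGT_zero ht).comp tendsto_sq_nhdsGT_zero))
      ((tendsto_mul_natFloor_div_nhdsGT_zero ht).comp tendsto_sq_nhdsGT_zero)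

theorem Wxa_tendsto_weakly_general {d : ℕ} {m : ℝ} (hm : m ≠ 0) {x : Ed d}
    {Wt : ℝ → Measure (Omega1 x)} (hWt : IsWienerFamily x Wt) {F : Type*} [NormedAddCommGroup F]
    [NormedSpace ℝ F] [CompleteSpace F] (f : BoundedContinuousFunction (ℝ × Omega1 x) F) :
    Tendsto (fun a => ∫ p, f p ∂(Wxa x m a)) (𝓝[>] 0)
      (𝓝 ((m ^ 2 / 2) • ∫ t in Ioi (0 : ℝ),
        Real.exp (-m ^ 2 * t / 2) • ∫ ω, f (t, ω) ∂(Wt t))) := by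
  have hrate : 0 < m ^ 2 / 2 := by positivity
  have hmixture : ∫ t, ∫ ω, f (t, ω) ∂(Wt t) ∂(expMeasure (m ^ 2 / 2)) =
      (m ^ 2 / 2) • ∫ t in Ioi 0, Real.exp (-m ^ 2 * t / 2) • ∫ ω, f (t, ω) ∂(Wt t) := by
    simp only [integral_expMeasure hrate.le, neg_mul, div_mul_eq_mul_div, neg_div]
  rw [← hmixture]
  refine (hWt.tendsto_integral_expMeasure_WxaN hrate f).congr' ?_
  filter_upwards [self_mem_nhdsWithin] with a ha
  exact (integral_Wxa x hm (mem_Ioi.1 ha).ne' f).symm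

end Limit

/-- **Theorem 3.1**: `W_{x,a} → (m²/2) W_x` weakly as `a → 0⁺`, where
`W_x(B) = ∫_0^∞ e^{-m²t/2} W_x^t(B_t) dt`. -/
theorem Wxa_tendsto_weakly (d : ℕ) (hd : 1 ≤ d) (m : ℝ) (hm : 0 < m) (x : Ed d)
    (Wt : ℝ → Measure (Omega1 x)) (hWt : IsWienerFamily x Wt) :
    ∀ f : BoundedContinuousFunction (ℝ × Omega1 x) ℝ,
      Tendsto (fun a : ℝ => ∫ p, f p ∂(Wxa x m a)) (nhdsWithin 0 (Set.Ioi 0))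
        (nhds ((m ^ 2 / 2) *
          ∫ t in Set.Ioi (0 : ℝ), Real.exp (-m ^ 2 * t / 2) * ∫ ω, f (t, ω) ∂(Wt t))) :=
  fun f => Wxa_tendsto_weakly_general hm.ne' hWt f

end
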